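/- arXiv:2108.01566 — 4 statements merged into one kernel-verified Lean document; each statement's English description precedes it below -/
import Mathlib

section
/- Let (A, t) be a C_k-algebra, let P be a prime filter of A, and let φ be the Birula–Rasiowa transformation. Then for every i with 1 ≤ i ≤ k: (a) t^i(P) is a prime filter of A; (b) P is a minimal (respectively maximal) prime filter if and only if t^i(P) is a minimal (respectively maximal) prime filter; (c) U is an ultrafilter if and only if t^i(U) is an ultrafilter; (d) φ(t^i(P)) = t^i(φ(P)); (e) if F is a c-filter of A with F ⊆ P, then F ⊆ φ(P) ∩ t^i(P); (f) if Q is a prime filter of A with P ⊆ Q, then φ(P) = Q or P = Q. -/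
universe u

/-- Modal pseudocomplemented De Morgan algebra (mpM-algebra). -/
class MpM (A : Type u) extends DistribLattice A, BoundedOrder A where
  dm : A → A   -- De Morgan negation ∼
  ps : A → A   -- pseudocomplement *
  dm_dm : ∀ x : A, dm (dm x) = x
  dm_sup : ∀ x y : A, dm (x ⊔ y) = dm x ⊓ dm y
  pseudo : ∀ a x : A, a ⊓ x = ⊥ ↔ x ≤ ps a
  modal : ∀ x : A, x ⊔ dm x ≤ x ⊔ ps x

open MpM

variable {A : Type u} [MpM A]

/-- ∇x = ∼(∼x ∧ x*) -/
def nabla (x : A) : A := dm (dm x ⊓ ps x)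

/-- △x = ∼∇∼x -/
def tri (x : A) : A := dm (nabla (dm x))

/-- A C_k-algebra structure on an mpM-algebra `A`: an automorphism `t` with `t^k = id`. -/
structure CkStr (A : Type u) [MpM A] (k : ℕ) where
  t : A → A
  bij : Function.Bijective t
  map_inf : ∀ x y : A, t (x ⊓ y) = t x ⊓ t y
  map_sup : ∀ x y : A, t (x ⊔ y) = t x ⊔ t y
  map_dm : ∀ x : A, t (dm x) = dm (t x)
  map_ps : ∀ x : A, t (ps x) = ps (t x)
  map_bot : t (⊥ : A) = ⊥
  map_top : t (⊤ : A) = ⊤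
  periodic : ∀ x : A, t^[k] x = x

/-- Lattice filter: nonempty, upward closed, closed under binary meets. -/
def IsLatFilter (F : Set A) : Prop :=
  F.Nonempty ∧ (∀ x ∈ F, ∀ y : A, x ≤ y → y ∈ F) ∧ ∀ x ∈ F, ∀ y ∈ F, x ⊓ y ∈ F

/-- c-filter: a filter closed under △ and t. -/
def IsCFilter {k : ℕ} (T : CkStr A k) (F : Set A) : Prop :=
  IsLatFilter F ∧ ∀ x ∈ F, tri x ∈ F ∧ T.t x ∈ F

/-- maximal c-filter: proper and not properly contained in a proper c-filter. -/
def IsMaxCFilter {k : ℕ} (T : CkStr A k) (N : Set A) : Prop :=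
  IsCFilter T N ∧ N ≠ Set.univ ∧
    ∀ G : Set A, IsCFilter T G → G ≠ Set.univ → N ⊆ G → N = G

/-- prime filter -/
def IsPrimeFilter (P : Set A) : Prop :=
  IsLatFilter P ∧ P ≠ Set.univ ∧ ∀ x y : A, x ⊔ y ∈ P → x ∈ P ∨ y ∈ P

/-- ultrafilter: maximal proper (lattice) filter -/
def IsUltraFilter (U : Set A) : Prop :=
  IsLatFilter U ∧ U ≠ Set.univ ∧
    ∀ G : Set A, IsLatFilter G → G ≠ Set.univ → U ⊆ G → U = G

/-- Birula–Rasiowa transformation φ(P) = A \ {∼x : x ∈ P}. -/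
def brPhi (P : Set A) : Set A := Set.univ \ (dm '' P)

/-- a ⇁ b = (⋁_{i=1}^{k} ∇(∼ t^i(a))) ∨ b -/
def rimp {k : ℕ} (T : CkStr A k) (a b : A) : A :=
  ((Finset.Icc 1 k).sup fun i => nabla (dm (T.t^[i] a))) ⊔ b

/-- cyclic deductive system -/
def IsCDS {k : ℕ} (T : CkStr A k) (D : Set A) : Prop :=
  (⊤ : A) ∈ D ∧ ∀ x ∈ D, ∀ y : A, rimp T x y ∈ D → y ∈ D

/-- maximal cyclic deductive system -/
def IsMaxCDS {k : ℕ} (T : CkStr A k) (M : Set A) : Prop :=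
  IsCDS T M ∧ M ≠ Set.univ ∧
    ∀ G : Set A, IsCDS T G → G ≠ Set.univ → M ⊆ G → M = G

/-- the smallest cyclic deductive system containing `X` -/
def genCDS {k : ℕ} (T : CkStr A k) (X : Set A) : Set A :=
  ⋂₀ {D : Set A | IsCDS T D ∧ X ⊆ D}

/-- K(A) = {x : t(x) = x and ∇x = x} -/
def Kset {k : ℕ} (T : CkStr A k) : Set A := {x : A | T.t x = x ∧ nabla x = x}

/-- consistency operator ∘x = ⋀_{i=0}^{k} t^i((∼x ∨ x) ∧ (x ∧ ∼x)*) -/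
def cCirc {k : ℕ} (T : CkStr A k) (x : A) : A :=
  (Finset.Icc 0 k).inf fun i => T.t^[i] ((dm x ⊔ x) ⊓ ps (x ⊓ dm x))

/-- x → y = ∼((∼(x∨y))* ∧ (x∨y)) ∨ ((∼(x∧y))* ∧ (x∧y)) -/
def mpTo (x y : A) : A :=
  dm (ps (dm (x ⊔ y)) ⊓ (x ⊔ y)) ⊔ (ps (dm (x ⊓ y)) ⊓ (x ⊓ y))

/-- x ⇒ y = (x → y) ∧ (∼y → ∼x) -/
def mpIff (x y : A) : A := mpTo x y ⊓ mpTo (dm y) (dm x)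

theorem aux_it {k : ℕ} (T : CkStr A k) (i : ℕ) :
    (∀ x y : A, T.t^[i] (x ⊓ y) = T.t^[i] x ⊓ T.t^[i] y) ∧
    (∀ x y : A, T.t^[i] (x ⊔ y) = T.t^[i] x ⊔ T.t^[i] y) ∧
    (∀ x : A, T.t^[i] (dm x) = dm (T.t^[i] x)) := by
  induction i with
  | zero => simp
  | succ n ih =>
    obtain ⟨h1, h2, h3⟩ := ih
    refine ⟨?_, ?_, ?_⟩ <;> intros <;>
      simp only [Function.iterate_succ_apply', h1, h2, h3, T.map_inf, T.map_sup, T.map_dm]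

theorem aux_filter {g : A → A} (hs : Function.Surjective g)
    (hi : ∀ x y, g (x ⊓ y) = g x ⊓ g y) {F : Set A} (hF : IsLatFilter F) :
    IsLatFilter (g ⁻¹' F) := by
  obtain ⟨⟨a, ha⟩, h2, h3⟩ := hF
  refine ⟨?_, ?_, ?_⟩
  · obtain ⟨b, rfl⟩ := hs a
    exact ⟨b, ha⟩
  · intro x hx y hxy
    refine h2 (g x) hx _ ?_
    rw [← inf_eq_left, ← hi, inf_eq_left.2 hxy]
  · intro x hx y hy
    simpa [hi] using h3 _ hx _ hy

theorem aux_proper {g : A → A} (hs : Function.Surjective g) {F : Set A} (hF : F ≠ Set.univ) :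
    g ⁻¹' F ≠ Set.univ := by
  intro h
  apply hF
  ext x
  obtain ⟨y, rfl⟩ := hs x
  have : y ∈ g ⁻¹' F := by rw [h]; trivial
  simpa using this

theorem aux_prime {g : A → A} (hs : Function.Surjective g)
    (hi : ∀ x y, g (x ⊓ y) = g x ⊓ g y) (hu : ∀ x y, g (x ⊔ y) = g x ⊔ g y)
    {F : Set A} (hF : IsPrimeFilter F) : IsPrimeFilter (g ⁻¹' F) := by
  refine ⟨aux_filter hs hi hF.1, aux_proper hs hF.2.1, ?_⟩
  intro x y h
  exact hF.2.2 _ _ (by simpa [hu] using h)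

theorem aux_bot {F : Set A} (hF : IsLatFilter F) (h : F ≠ Set.univ) : (⊥ : A) ∉ F := by
  intro hb
  exact h (Set.eq_univ_of_forall fun x => hF.2.1 _ hb x bot_le)

theorem aux_ultra {f g : A → A} (hfg : ∀ x, f (g x) = x) (hgf : ∀ x, g (f x) = x)
    (hi : ∀ x y, g (x ⊓ y) = g x ⊓ g y) (hi' : ∀ x y, f (x ⊓ y) = f x ⊓ f y)
    {U : Set A} (hU : IsUltraFilter U) : IsUltraFilter (g ⁻¹' U) := by
  have hs : Function.Surjective g := fun x => ⟨f x, hgf x⟩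
  have hs' : Function.Surjective f := fun x => ⟨g x, hfg x⟩
  refine ⟨aux_filter hs hi hU.1, aux_proper hs hU.2.1, ?_⟩
  intro G hG hG' hsub
  have := hU.2.2 (f ⁻¹' G) (aux_filter hs' hi' hG) (aux_proper hs' hG')
    (fun x hx => hsub (by simpa [hgf] using hx))
  rw [this]
  ext x
  simp [hfg]

theorem aux_mem_phi (P : Set A) (x : A) : x ∈ brPhi P ↔ dm x ∉ P := by
  unfold brPhi
  simp only [Set.mem_diff, Set.mem_univ, true_and, Set.mem_image, not_exists, not_and]
  constructor
  · intro h hx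
    exact h _ hx (dm_dm x)
  · rintro h y hy rfl
    exact h (by rwa [dm_dm])

theorem aux_dm_inf (x y : A) : dm (x ⊓ y) = dm x ⊔ dm y := by
  have := dm_sup (dm x) (dm y)
  rw [dm_dm, dm_dm] at this
  rw [← this, dm_dm]

theorem aux_ps {F : Set A} (hF : IsLatFilter F) (h : F ≠ Set.univ) {x : A} (hx : x ∈ F)
    (hp : ps x ∈ F) : False := by
  have h1 := hF.2.2 _ hx _ hp
  rw [(pseudo x (ps x)).2 le_rfl] at h1
  exact aux_bot hF h h1

theorem aux_phi_filter {P : Set A} (hP : IsPrimeFilter P) :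
    IsLatFilter (brPhi P) ∧ brPhi P ≠ Set.univ := by
  have hb : dm (⊥ : A) = ⊤ := by
    have := dm_sup (dm ⊤) (⊥ : A)
    rw [sup_bot_eq, dm_dm] at this
    exact (inf_eq_top_iff.1 this.symm).2
  have ht : (⊤ : A) ∈ P := by
    obtain ⟨a, ha⟩ := hP.1.1
    exact hP.1.2.1 _ ha _ le_top
  refine ⟨⟨⟨⊤, ?_⟩, ?_, ?_⟩, ?_⟩
  · rw [aux_mem_phi, ← hb, dm_dm]
    exact aux_bot hP.1 hP.2.1
  · intro x hx y hxy
    rw [aux_mem_phi] at *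
    intro h
    refine hx (hP.1.2.1 _ h _ ?_)
    rw [← sup_eq_right.2 hxy, dm_sup]
    exact inf_le_left
  · intro x hx y hy
    rw [aux_mem_phi] at *
    rw [aux_dm_inf]
    intro h
    exact (hP.2.2 _ _ h).elim hx hy
  · intro h
    have : (⊥ : A) ∈ brPhi P := by rw [h]; trivial
    rw [aux_mem_phi, hb] at this
    exact this ht

theorem aux_sub {P Q : Set A} (hP : IsPrimeFilter P) (hQ : IsLatFilter Q) (hQ' : Q ≠ Set.univ)
    (h : P ⊆ Q) (hne : P ≠ Q) : Q ⊆ brPhi P := by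
  have key : ∀ x ∈ Q, x ∉ P → dm x ∉ P := by
    intro x hx hxP hd
    have h1 : x ⊔ ps x ∈ P := hP.1.2.1 _ hd _ (le_sup_right.trans (modal x))
    rcases hP.2.2 _ _ h1 with h2 | h2
    · exact hxP h2
    · exact aux_ps hQ hQ' hx (h h2)
  obtain ⟨x, hx, hxP⟩ : ∃ x ∈ Q, x ∉ P := by
    by_contra hc
    push Not at hc
    exact hne (Set.Subset.antisymm h hc)
  intro y hy
  rw [aux_mem_phi]
  intro hd
  refine key (x ⊓ y) (hQ.2.2 _ hx _ hy) (fun h' => hxP (hP.1.2.1 _ h' _ inf_le_left)) ?_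
  rw [aux_dm_inf]
  exact hP.1.2.1 _ hd _ le_sup_right

theorem stmt0 {k : ℕ} (hk : 0 < k) (T : CkStr A k) (P : Set A)
    (hP : IsPrimeFilter P) :
    ∀ i : ℕ, 1 ≤ i → i ≤ k →
      (IsPrimeFilter (T.t^[i] '' P)) ∧
      ((∀ Q : Set A, IsPrimeFilter Q → Q ⊆ P → Q = P) ↔
        (∀ Q : Set A, IsPrimeFilter Q → Q ⊆ T.t^[i] '' P → Q = T.t^[i] '' P)) ∧
      ((∀ Q : Set A, IsPrimeFilter Q → P ⊆ Q → P = Q) ↔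
        (∀ Q : Set A, IsPrimeFilter Q → T.t^[i] '' P ⊆ Q → T.t^[i] '' P = Q)) ∧
      (∀ U : Set A, IsUltraFilter U ↔ IsUltraFilter (T.t^[i] '' U)) ∧
      (brPhi (T.t^[i] '' P) = T.t^[i] '' brPhi P) ∧
      (∀ F : Set A, IsCFilter T F → F ⊆ P → F ⊆ brPhi P ∩ T.t^[i] '' P) ∧
      (∀ Q : Set A, IsPrimeFilter Q → P ⊆ Q → brPhi P = Q ∨ P = Q) := by
  intro i _ hik
  have hfg : ∀ x, T.t^[i] (T.t^[k - i] x) = x := by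
    intro x
    rw [← Function.iterate_add_apply, Nat.add_sub_cancel' hik, T.periodic]
  have hgf : ∀ x, T.t^[k - i] (T.t^[i] x) = x := by
    intro x
    rw [← Function.iterate_add_apply, Nat.sub_add_cancel hik, T.periodic]
  have him : ∀ S : Set A, T.t^[i] '' S = T.t^[k - i] ⁻¹' S := fun S =>
    congrFun (Set.image_eq_preimage_of_inverse hgf hfg) S
  obtain ⟨fi, fs, fd⟩ := aux_it T i
  obtain ⟨gi, gs, gd⟩ := aux_it T (k - i)
  have hiter : ∀ F : Set A, IsCFilter T F → ∀ n, ∀ x ∈ F, T.t^[n] x ∈ F := by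
    intro F hF n
    induction n with
    | zero => intro x hx; exact hx
    | succ n ih =>
      intro x hx
      rw [Function.iterate_succ_apply']
      exact (hF.2 _ (ih x hx)).2
  simp only [him]
  generalize T.t^[i] = f at *
  generalize hg : T.t^[k - i] = g at *
  have sg : Function.Surjective g := fun x => ⟨f x, hgf x⟩
  have sf : Function.Surjective f := fun x => ⟨g x, hfg x⟩
  have e1 : ∀ S : Set A, f ⁻¹' (g ⁻¹' S) = S := fun S => by ext x; simp [hgf]
  have e2 : ∀ S : Set A, g ⁻¹' (f ⁻¹' S) = S := fun S => by ext x; simp [hfg]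
  have pf : ∀ Q : Set A, IsPrimeFilter Q → IsPrimeFilter (f ⁻¹' Q) :=
    fun Q hQ => aux_prime sf fi fs hQ
  have pg : ∀ Q : Set A, IsPrimeFilter Q → IsPrimeFilter (g ⁻¹' Q) :=
    fun Q hQ => aux_prime sg gi gs hQ
  refine ⟨pg P hP, ⟨?_, ?_⟩, ⟨?_, ?_⟩, ?_, ?_, ?_, ?_⟩
  · intro h Q hQ hs
    have := h _ (pf Q hQ) (by rw [← e1 P]; exact Set.preimage_mono hs)
    rw [← this, e2]
  · intro h Q hQ hs
    have := h _ (pg Q hQ) (Set.preimage_mono hs)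
    rw [← e1 P, ← this, e1]
  · intro h Q hQ hs
    have := h _ (pf Q hQ) (by rw [← e1 P]; exact Set.preimage_mono hs)
    rw [this, e2]
  · intro h Q hQ hs
    have := h _ (pg Q hQ) (Set.preimage_mono hs)
    rw [← e1 P, this, e1]
  · intro U
    refine ⟨aux_ultra hfg hgf gi fi, fun h => ?_⟩
    have := aux_ultra hgf hfg fi gi h
    rwa [e1] at this
  · ext x
    simp only [aux_mem_phi, Set.mem_preimage, gd]
  · intro F hF hFP x hx
    refine ⟨?_, ?_⟩
    · rw [aux_mem_phi]
      intro hd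
      have h1 := hFP (hF.2 x hx).1
      unfold tri nabla at h1
      rw [dm_dm, dm_dm] at h1
      exact aux_ps hP.1 hP.2.1 hd (hP.1.2.1 _ h1 _ inf_le_right)
    · have := hiter F hF (k - i) x hx
      rw [hg] at this
      exact hFP this
  · intro Q hQ hPQ
    by_contra hc
    push Not at hc
    have h1 := aux_sub hP hQ.1 hQ.2.1 hPQ hc.2
    obtain ⟨h2, h3⟩ := aux_phi_filter hP
    have h4 := aux_sub hQ h2 h3 h1 hc.1.symm
    apply hc.2
    refine Set.Subset.antisymm hPQ fun x hx => ?_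
    by_contra hxP
    have h5 : dm x ∈ brPhi P := by rwa [aux_mem_phi, dm_dm]
    have h6 := h4 h5
    rw [aux_mem_phi, dm_dm] at h6
    exact h6 hx
end

section
/- In every C_k-algebra (A, t) the following hold for all a, b, c ∈ A: (i) a ⇁ a = 1; (ii) a ⇁ △a = 1; (iii) a ⇁ t^s(a) = 1 for every natural number s; (iv) a ⇁ (a ∧ b) = a ⇁ b; (v) if a ≤ b then c ⇁ a ≤ c ⇁ b; (vii) a ⇁ (b ⇁ a) = 1; (viii) if 1 ⇁ a = 1 then a = 1; (x) a ⇁ 1 = 1. -/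
universe u

open MpM

variable {A : Type u} [MpM A]

theorem aux_dm_bot : dm (⊤ : A) = ⊥ := by
  have h := dm_sup (⊤ : A) (dm ⊥)
  rw [top_sup_eq, dm_dm, inf_bot_eq] at h
  exact h

theorem aux_dm_top : dm (⊥ : A) = ⊤ := by
  rw [← aux_dm_bot, dm_dm]

theorem aux_inf_ps (x : A) : x ⊓ ps x = ⊥ := (pseudo x (ps x)).2 le_rfl

theorem aux_nabla (y : A) : nabla (dm y) ⊔ y = ⊤ := by
  have h : (y ⊓ ps (dm y)) ⊓ dm y = ⊥ := by
    rw [inf_assoc, inf_comm (ps _), aux_inf_ps, inf_bot_eq]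
  have h2 := congrArg dm h
  rw [aux_dm_inf, dm_dm, aux_dm_top] at h2
  unfold nabla
  rw [dm_dm]
  exact h2

theorem aux_nabla_bool (x : A) : nabla x ⊔ dm (nabla x) = ⊤ := by
  have hm : dm x ⊓ dm (ps x) ≤ x := by
    have h1 : dm x ≤ x ⊔ ps x := le_sup_right.trans (modal x)
    have h2 : dm x ⊔ (x ⊔ ps x) = x ⊔ ps x := sup_eq_right.2 h1
    have h3 := congrArg dm h2
    rw [dm_sup, dm_dm, dm_sup] at h3
    exact inf_eq_right.1 h3
  have h : (dm x ⊓ ps x) ⊓ dm (dm x ⊓ ps x) = ⊥ := by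
    rw [aux_dm_inf, dm_dm, inf_sup_left, ← le_bot_iff]
    refine sup_le ?_ ?_
    · rw [← aux_inf_ps x]
      exact le_inf inf_le_right (inf_le_left.trans inf_le_right)
    · rw [← aux_inf_ps x]
      exact le_inf ((le_inf (inf_le_left.trans inf_le_left) inf_le_right).trans hm)
        (inf_le_left.trans inf_le_right)
  have h2 := congrArg dm h
  rw [aux_dm_inf, aux_dm_top] at h2
  exact h2

theorem aux_le {k : ℕ} (hk : 0 < k) (T : CkStr A k) (a : A) (s : ℕ) :
    nabla (dm (T.t^[s] a)) ≤ (Finset.Icc 1 k).sup fun i => nabla (dm (T.t^[i] a)) := by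
  have hp : Function.IsPeriodicPt T.t k a := T.periodic a
  have hmod : T.t^[s % k] a = T.t^[s] a := hp.iterate_mod_apply s
  have hlt := Nat.mod_lt s hk
  rcases Nat.eq_zero_or_pos (s % k) with h0 | h0
  · have : T.t^[k] a = T.t^[s] a := by
      rw [← hmod, h0, T.periodic]; rfl
    rw [← this]
    exact Finset.le_sup (f := fun i => nabla (dm (T.t^[i] a))) (Finset.mem_Icc.2 ⟨hk, le_rfl⟩)
  · rw [← hmod]
    exact Finset.le_sup (f := fun i => nabla (dm (T.t^[i] a))) (Finset.mem_Icc.2 ⟨h0, hlt.le⟩)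

theorem aux_iter {k : ℕ} (hk : 0 < k) (T : CkStr A k) (a : A) (s : ℕ) :
    rimp T a (T.t^[s] a) = ⊤ := by
  rw [← top_le_iff, ← aux_nabla (T.t^[s] a)]
  exact sup_le_sup_right (aux_le hk T a s) _

theorem stmt5 {k : ℕ} (hk : 0 < k) (T : CkStr A k) (a b c : A) :
    rimp T a a = ⊤ ∧
    rimp T a (tri a) = ⊤ ∧
    (∀ s : ℕ, rimp T a (T.t^[s] a) = ⊤) ∧
    rimp T a (a ⊓ b) = rimp T a b ∧
    (a ≤ b → rimp T c a ≤ rimp T c b) ∧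
    rimp T a (rimp T b a) = ⊤ ∧
    (rimp T ⊤ a = ⊤ → a = ⊤) ∧
    rimp T a ⊤ = ⊤ := by
  have hi : rimp T a a = ⊤ := aux_iter hk T a 0
  refine ⟨hi, ?_, aux_iter hk T a, ?_, ?_, ?_, ?_, ?_⟩
  · rw [← top_le_iff, ← aux_nabla_bool (dm a)]
    exact sup_le_sup_right (aux_le hk T a 0) _
  · have : rimp T a (a ⊓ b) = rimp T a a ⊓ rimp T a b := sup_inf_left _ _ _
    rw [this, hi, top_inf_eq]
  · intro h
    exact sup_le_sup_left h _
  · rw [← top_le_iff, ← hi]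
    exact sup_le_sup_left le_sup_right _
  · intro h
    rw [← h]
    refine (sup_eq_right.2 (Finset.sup_le fun i _ => ?_)).symm
    have ht : T.t^[i] ⊤ = ⊤ := Function.iterate_fixed T.map_top i
    have hps : ps (⊥ : A) = ⊤ := top_le_iff.1 ((pseudo _ _).1 (bot_inf_eq _))
    simp [ht, nabla, aux_dm_bot, aux_dm_top, hps]
  · exact sup_top_eq _
end

section
/- For every C_k-algebra (A, t): (i) every proper cyclic deductive system of A is the intersection of the maximal cyclic deductive systems containing it; (ii) the intersection of all maximal cyclic deductive systems of A equals {1}. -/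
universe u

open MpM

variable {A : Type u} [MpM A]

namespace Aux9

theorem dm_inf (x y : A) : dm (x ⊓ y) = dm x ⊔ dm y := by
  rw [← dm_dm (dm x ⊔ dm y), dm_sup, dm_dm, dm_dm]

theorem dm_anti {x y : A} (h : x ≤ y) : dm y ≤ dm x := by
  have h1 := dm_sup x y
  rw [sup_eq_right.2 h] at h1
  rw [h1]; exact inf_le_left

theorem dm_bot : dm (⊥ : A) = ⊤ := by
  refine top_le_iff.1 ?_
  have := dm_anti (bot_le : (⊥ : A) ≤ dm ⊤)
  rwa [dm_dm] at this

theorem dm_top : dm (⊤ : A) = ⊥ := by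
  rw [← dm_bot, dm_dm]

theorem inf_ps (x : A) : x ⊓ ps x = ⊥ := (pseudo x (ps x)).2 le_rfl

theorem ps_anti {x y : A} (h : x ≤ y) : ps y ≤ ps x := by
  rw [← pseudo, ← le_bot_iff, ← inf_ps y]
  exact inf_le_inf_right _ h

theorem ps_sup (x y : A) : ps (x ⊔ y) = ps x ⊓ ps y := by
  apply le_antisymm
  · exact le_inf (ps_anti le_sup_left) (ps_anti le_sup_right)
  · rw [← pseudo, inf_sup_right, ← inf_assoc, inf_ps, bot_inf_eq, bot_sup_eq,
      inf_comm (ps x), ← inf_assoc, inf_ps, bot_inf_eq]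

theorem tri_eq (x : A) : tri x = x ⊓ ps (dm x) := by
  simp [tri, nabla, dm_dm]

theorem tri_inf (x y : A) : tri (x ⊓ y) = tri x ⊓ tri y := by
  rw [tri_eq, tri_eq, tri_eq, dm_inf, ps_sup, inf_inf_inf_comm]

theorem tri_disj (x : A) : tri x ⊓ dm (tri x) = ⊥ := by
  rw [tri_eq, dm_inf, inf_sup_left]
  have h1 : x ⊓ ps (dm x) ⊓ dm x = ⊥ := by
    rw [inf_assoc, inf_comm (ps _), inf_ps, inf_bot_eq]
  have h2 := dm_anti (modal (dm x))
  rw [dm_sup, dm_sup, dm_dm] at h2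
  have h3 : x ⊓ ps (dm x) ⊓ dm (ps (dm x)) ≤ ⊥ := by
    rw [← inf_ps (dm x)]
    refine le_inf ?_ (inf_le_left.trans inf_le_right)
    refine le_trans ?_ (h2.trans inf_le_right)
    exact inf_le_inf_right _ inf_le_left
  rw [h1, le_bot_iff.1 h3, sup_bot_eq]

def box {k : ℕ} (T : CkStr A k) (x : A) : A :=
  (Finset.Icc 1 k).inf fun i => tri (T.t^[i] x)

variable {k : ℕ} (T : CkStr A k)

theorem dm_finf (s : Finset ℕ) (f : ℕ → A) : dm (s.inf f) = s.sup fun i => dm (f i) := by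
  classical
  induction s using Finset.induction_on with
  | empty => simp [dm_top]
  | insert a s ha ih => rw [Finset.inf_insert, Finset.sup_insert, dm_inf, ih]

theorem rimp_eq (x y : A) : rimp T x y = dm (box T x) ⊔ y := by
  simp [rimp, box, dm_finf, tri, dm_dm]

theorem box_disj (x : A) : box T x ⊓ dm (box T x) = ⊥ := by
  rw [← disjoint_iff]
  conv_rhs => rw [box, dm_finf]
  rw [Finset.disjoint_sup_right]
  intro i hi
  exact (disjoint_iff.2 (tri_disj (T.t^[i] x))).mono_left (Finset.inf_le hi)

theorem box_cov (x : A) : dm (box T x) ⊔ box T x = ⊤ := by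
  have := congrArg dm (box_disj T x)
  rwa [dm_inf, dm_dm, dm_bot] at this

theorem box_le (hk : 0 < k) (x : A) : box T x ≤ x := by
  have h : box T x ≤ tri (T.t^[k] x) :=
    Finset.inf_le (f := fun i => tri (T.t^[i] x)) (Finset.mem_Icc.2 ⟨hk, le_rfl⟩)
  rw [T.periodic, tri_eq] at h
  exact h.trans inf_le_left

theorem it_inf (i : ℕ) (x y : A) : T.t^[i] (x ⊓ y) = T.t^[i] x ⊓ T.t^[i] y := by
  induction i with
  | zero => rfl
  | succ n ih => simp only [Function.iterate_succ_apply', ih, T.map_inf]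

theorem box_inf (x y : A) : box T (x ⊓ y) = box T x ⊓ box T y := by
  simp only [box, it_inf, tri_inf]
  exact Finset.inf_inf

theorem box_mono {x y : A} (h : x ≤ y) : box T x ≤ box T y := by
  have := box_inf T x y
  rw [inf_eq_left.2 h] at this
  rw [this]; exact inf_le_right

theorem t_tri (x : A) : T.t (tri x) = tri (T.t x) := by
  rw [tri_eq, tri_eq, T.map_inf, T.map_ps, T.map_dm]

theorem t_box (hk : 0 < k) (x : A) : T.t (box T x) = box T x := by
  have h0 : T.t (box T x) = (Finset.Icc 1 k).inf fun i => tri (T.t^[i+1] x) := by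
    rw [box, Finset.comp_inf_eq_inf_comp T.t T.map_inf T.map_top]
    congr 1
    funext i
    simp only [Function.comp, t_tri, Function.iterate_succ_apply']
  rw [h0]
  apply le_antisymm
  · refine Finset.le_inf fun i hi => ?_
    rw [Finset.mem_Icc] at hi
    by_cases h1 : i = 1
    · subst h1
      refine (Finset.inf_le (Finset.mem_Icc.2 ⟨hk, le_rfl⟩)).trans (le_of_eq ?_)
      rw [Function.iterate_succ_apply', T.periodic]; rfl
    · obtain ⟨j, rfl⟩ : ∃ j, i = j + 1 := ⟨i - 1, by omega⟩
      exact Finset.inf_le (f := fun i => tri (T.t^[i+1] x))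
        (Finset.mem_Icc.2 ⟨by omega, by omega⟩)
  · refine Finset.le_inf fun i hi => ?_
    rw [Finset.mem_Icc] at hi
    by_cases h1 : i = k
    · subst h1
      rw [Function.iterate_succ_apply', T.periodic]
      exact Finset.inf_le (f := fun i => tri (T.t^[i] x)) (Finset.mem_Icc.2 ⟨le_rfl, hk⟩)
    · exact Finset.inf_le (f := fun i => tri (T.t^[i] x))
        (Finset.mem_Icc.2 ⟨by omega, by omega⟩)

theorem box_fix (hk : 0 < k) (x : A) (h : T.t x = x) (hd : x ⊓ dm x = ⊥) : box T x = x := by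
  refine le_antisymm (box_le T hk x) (Finset.le_inf fun i _ => ?_)
  rw [Function.iterate_fixed h, tri_eq]
  exact le_inf le_rfl ((pseudo _ _).1 (by rw [inf_comm, hd]))

theorem box_box (hk : 0 < k) (x : A) : box T (box T x) = box T x :=
  box_fix T hk _ (t_box T hk x) (box_disj T x)

theorem box_dm_box (hk : 0 < k) (x : A) : box T (dm (box T x)) = dm (box T x) :=
  box_fix T hk _ (by rw [T.map_dm, t_box T hk]) (by rw [dm_dm, inf_comm, box_disj])

theorem box_top (hk : 0 < k) : box T (⊤ : A) = ⊤ :=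
  box_fix T hk _ T.map_top (by rw [dm_top, inf_bot_eq])

theorem cds_up (hk : 0 < k) {D : Set A} (hD : IsCDS T D) {x y : A} (hx : x ∈ D) (h : x ≤ y) :
    y ∈ D := by
  apply hD.2 x hx
  rw [rimp_eq]
  have : dm (box T x) ⊔ y = ⊤ := by
    rw [← top_le_iff, ← box_cov T x]
    exact sup_le_sup_left ((box_le T hk x).trans h) _
  rw [this]; exact hD.1

/-- deduction theorem -/
theorem cds_ext (hk : 0 < k) {D : Set A} (hD : IsCDS T D) (a : A) :
    IsCDS T {y : A | dm (box T a) ⊔ y ∈ D} := by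
  refine ⟨by simpa using hD.1, fun x hx y hy => ?_⟩
  simp only [Set.mem_setOf_eq, rimp_eq] at hx hy ⊢
  apply hD.2 _ hx
  rw [rimp_eq]
  refine cds_up T hk hD hy ?_
  have key : box T a ⊓ box T (dm (box T a) ⊔ x) ≤ box T x := by
    rw [← box_box T hk a, ← box_inf, box_box T hk a]
    apply box_mono
    rw [inf_sup_left, box_disj, bot_sup_eq]
    exact inf_le_right
  have k2 := dm_anti key
  rw [dm_inf] at k2
  refine sup_le (le_sup_right.trans' le_sup_left) (sup_le ?_ (le_sup_right.trans' le_sup_right))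
  exact k2.trans (sup_le (le_sup_right.trans' le_sup_left) le_sup_left)

theorem exists_max (hk : 0 < k) {D : Set A} (hD : IsCDS T D) {a : A} (ha : a ∉ D) :
    ∃ M, IsMaxCDS T M ∧ D ⊆ M ∧ a ∉ M := by
  obtain ⟨M, hDM, hM⟩ := zorn_subset_nonempty {E : Set A | IsCDS T E ∧ a ∉ E} (by
    intro c hc hch hne
    refine ⟨⋃₀ c, ⟨⟨?_, ?_⟩, ?_⟩, fun s hs => Set.subset_sUnion_of_mem hs⟩
    · obtain ⟨E, hE⟩ := hne
      exact ⟨E, hE, (hc hE).1.1⟩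
    · rintro x ⟨E, hE, hx⟩ y ⟨F, hF, hy⟩
      rcases hch.total hE hF with h | h
      · exact ⟨F, hF, (hc hF).1.2 x (h hx) y hy⟩
      · exact ⟨E, hE, (hc hE).1.2 x hx y (h hy)⟩
    · rintro ⟨E, hE, h⟩
      exact (hc hE).2 h) D ⟨hD, ha⟩
  obtain ⟨hMc, haM⟩ := hM.prop
  have hb : dm (box T a) ∈ M := by
    have hsub := hM.le_of_ge (y := {y : A | dm (box T (dm (box T a))) ⊔ y ∈ M})
      ⟨cds_ext T hk hMc _, by
        rw [Set.mem_setOf_eq, box_dm_box T hk, dm_dm, sup_eq_right.2 (box_le T hk a)]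
        exact haM⟩ (fun y hy => cds_up T hk hMc hy le_sup_right)
    apply hsub
    rw [Set.mem_setOf_eq, box_dm_box T hk, dm_dm, sup_comm, box_cov]
    exact hMc.1
  refine ⟨M, ⟨hMc, fun h => haM (h ▸ Set.mem_univ a), fun G hG hGne hMG => ?_⟩, hDM, haM⟩
  by_cases haG : a ∈ G
  · exfalso
    apply hGne
    have hbot : (⊥ : A) ∈ G := by
      apply hG.2 a haG
      rw [rimp_eq, sup_bot_eq]
      exact hMG hb
    exact Set.eq_univ_of_forall fun y => cds_up T hk hG hbot bot_le
  · exact hMG.antisymm (hM.le_of_ge ⟨hG, haG⟩ hMG)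

end Aux9

theorem stmt9 {k : ℕ} (hk : 0 < k) (T : CkStr A k) :
    (∀ D : Set A, IsCDS T D → D ≠ Set.univ →
      D = ⋂₀ {M : Set A | IsMaxCDS T M ∧ D ⊆ M}) ∧
    ⋂₀ {M : Set A | IsMaxCDS T M} = {(⊤ : A)} := by
  have key : ∀ D : Set A, IsCDS T D → D = ⋂₀ {M : Set A | IsMaxCDS T M ∧ D ⊆ M} := by
    intro D hD
    apply Set.Subset.antisymm
    · exact Set.subset_sInter fun M hM => hM.2
    · intro a ha
      by_contra hna
      obtain ⟨M, hM, hDM, haM⟩ := Aux9.exists_max T hk hD hna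
      exact haM (ha M ⟨hM, hDM⟩)
  refine ⟨fun D hD _ => key D hD, ?_⟩
  have h1 : IsCDS T ({⊤} : Set A) := by
    refine ⟨rfl, fun x hx y hy => ?_⟩
    rw [Set.mem_singleton_iff] at hx hy ⊢
    rwa [hx, Aux9.rimp_eq, Aux9.box_top T hk, Aux9.dm_top, bot_sup_eq] at hy
  conv_rhs => rw [key _ h1]
  congr 1
  ext M
  simp only [Set.mem_setOf_eq, Set.singleton_subset_iff]
  exact ⟨fun h => ⟨h, h.1.1⟩, fun h => h.1⟩
end

section
/- Let (A, t) be a C_k-algebra, a ∈ A and H ⊆ A. Write D(X) for the smallest cyclic deductive system containing X. Then: (i) D({a}) = {x ∈ A : ⋀_{j=1}^{k} t^j(△a) ≤ x}; (ii) D(H ∪ {a}) = {x ∈ A : a ⇁ x ∈ D(H)}; (iii) D({a}) = {x ∈ A : a ⇁ x = 1}. -/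
universe u

open MpM

variable {A : Type u} [MpM A]

namespace CkAux

theorem dm_anti {x y : A} (h : x ≤ y) : dm y ≤ dm x := by
  have h1 := dm_sup x y
  rw [sup_eq_right.mpr h] at h1
  rw [h1]; exact inf_le_left

theorem dm_inf (x y : A) : dm (x ⊓ y) = dm x ⊔ dm y := by
  have h1 := dm_sup (dm x) (dm y)
  rw [dm_dm, dm_dm] at h1
  rw [← h1, dm_dm]

theorem dm_top : dm (⊤ : A) = ⊥ := by
  apply le_bot_iff.mp
  have h := dm_anti (le_top (a := dm (⊥ : A)))
  rwa [dm_dm] at h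

theorem dm_bot : dm (⊥ : A) = ⊤ := by
  rw [← dm_top, dm_dm]

theorem inf_ps (x : A) : x ⊓ ps x = ⊥ := (pseudo x _).mpr le_rfl

theorem tri_eq (x : A) : tri x = x ⊓ ps (dm x) := by
  unfold tri nabla
  rw [dm_dm, dm_dm]

theorem bool_inf {u v : A} (hu : u ⊓ dm u = ⊥) (hv : v ⊓ dm v = ⊥) :
    (u ⊓ v) ⊓ dm (u ⊓ v) = ⊥ := by
  rw [dm_inf, inf_sup_left]
  apply le_bot_iff.mp
  apply sup_le
  · rw [← hu]; exact inf_le_inf_right _ inf_le_left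
  · rw [← hv]; exact inf_le_inf_right _ inf_le_right

theorem bool_dm {u : A} (hu : u ⊓ dm u = ⊥) : dm u ⊔ u = ⊤ := by
  have h := congrArg dm hu
  rwa [dm_inf, dm_dm, dm_bot] at h

theorem tri_bool (x : A) : tri x ⊓ dm (tri x) = ⊥ := by
  rw [tri_eq, dm_inf, inf_sup_left]
  apply le_bot_iff.mp
  apply sup_le
  · calc x ⊓ ps (dm x) ⊓ dm x ≤ dm x ⊓ ps (dm x) :=
        le_inf inf_le_right (inf_le_left.trans inf_le_right)
      _ ≤ ⊥ := (inf_ps _).le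
  · have h := dm_anti (modal (dm x))
    rw [dm_sup, dm_sup, dm_dm] at h
    have h2 : x ⊓ ps (dm x) ⊓ dm (ps (dm x)) ≤ dm x :=
      (le_inf (inf_le_left.trans inf_le_left) inf_le_right).trans (h.trans inf_le_right)
    calc x ⊓ ps (dm x) ⊓ dm (ps (dm x)) ≤ dm x ⊓ ps (dm x) :=
        le_inf h2 (inf_le_left.trans inf_le_right)
      _ ≤ ⊥ := (inf_ps _).le

variable {k : ℕ} (T : CkStr A k)

theorem t_mono {x y : A} (h : x ≤ y) : T.t x ≤ T.t y := by
  have h1 := T.map_inf x y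
  rw [inf_eq_left.mpr h] at h1
  rw [h1]; exact inf_le_right

theorem iter_mono (n : ℕ) {x y : A} (h : x ≤ y) : T.t^[n] x ≤ T.t^[n] y := by
  induction n with
  | zero => exact h
  | succ n ih => simp only [Function.iterate_succ_apply']; exact t_mono T ih

theorem iter_dm (n : ℕ) (x : A) : T.t^[n] (dm x) = dm (T.t^[n] x) := by
  induction n with
  | zero => rfl
  | succ n ih => simp only [Function.iterate_succ_apply', ih, T.map_dm]

theorem iter_tri (n : ℕ) (x : A) : T.t^[n] (tri x) = tri (T.t^[n] x) := by
  induction n with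
  | zero => rfl
  | succ n ih =>
    rw [Function.iterate_succ_apply', Function.iterate_succ_apply', ih]
    simp only [tri_eq, T.map_inf, T.map_ps, T.map_dm]

/-- The principal element. -/
def E (x : A) : A := (Finset.Icc 1 k).inf fun j => T.t^[j] (tri x)

theorem rimp_eq (x y : A) : rimp T x y = dm (E T x) ⊔ y := by
  unfold rimp E
  congr 1
  induction (Finset.Icc 1 k) using Finset.induction_on with
  | empty => simp [dm_top]
  | insert i s hi ih =>
    rw [Finset.sup_insert, Finset.inf_insert, dm_inf, ih, iter_tri]
    congr 1
    unfold tri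
    rw [dm_dm]

theorem E_le (hk : 0 < k) (x : A) : E T x ≤ x := by
  have h : E T x ≤ T.t^[k] (tri x) :=
    Finset.inf_le (f := fun j => T.t^[j] (tri x)) (Finset.mem_Icc.mpr ⟨hk, le_rfl⟩)
  rw [T.periodic, tri_eq] at h
  exact h.trans inf_le_left

theorem E_bool (x : A) : E T x ⊓ dm (E T x) = ⊥ := by
  unfold E
  induction (Finset.Icc 1 k) using Finset.induction_on with
  | empty => simp [dm_top]
  | insert i s hi ih =>
    rw [Finset.inf_insert]
    refine bool_inf ?_ ih
    rw [iter_tri]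
    exact tri_bool _

theorem t_inf (s : Finset ℕ) (f : ℕ → A) : T.t (s.inf f) = s.inf fun i => T.t (f i) := by
  induction s using Finset.induction_on with
  | empty => simp [T.map_top]
  | insert i s hi ih => rw [Finset.inf_insert, Finset.inf_insert, T.map_inf, ih]

theorem E_le_t (hk : 0 < k) (x : A) : E T x ≤ T.t (E T x) := by
  unfold E
  rw [t_inf]
  apply Finset.le_inf
  intro j hj
  have hj := Finset.mem_Icc.mp hj
  by_cases h : j + 1 ≤ k
  · rw [← Function.iterate_succ_apply' T.t]
    exact Finset.inf_le (f := fun j => T.t^[j] (tri x)) (Finset.mem_Icc.mpr ⟨by omega, h⟩)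
  · have : j = k := by omega
    subst this
    rw [T.periodic]
    exact Finset.inf_le (f := fun j => T.t^[j] (tri x)) (Finset.mem_Icc.mpr ⟨le_rfl, hk⟩)

theorem le_E {w x : A} (ht : w ≤ T.t w) (hb : w ⊓ dm w = ⊥) (h : w ≤ x) : w ≤ E T x := by
  apply Finset.le_inf
  intro j hj
  clear hj
  have h1 : w ≤ T.t^[j] w := by
    induction j with
    | zero => exact le_rfl
    | succ n ih =>
      rw [Function.iterate_succ_apply']
      exact ht.trans (t_mono T ih)
  refine h1.trans (iter_mono T j ?_)
  rw [tri_eq]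
  refine le_inf h ((pseudo _ _).mp (le_bot_iff.mp ?_))
  rw [← hb, inf_comm]
  exact inf_le_inf_left _ (dm_anti h)

theorem rimp_eq_top_iff (a x : A) : rimp T a x = ⊤ ↔ E T a ≤ x := by
  rw [rimp_eq]
  constructor
  · intro h
    calc E T a = E T a ⊓ (dm (E T a) ⊔ x) := by rw [h, inf_top_eq]
      _ = E T a ⊓ x := by rw [inf_sup_left, E_bool, bot_sup_eq]
      _ ≤ x := inf_le_right
  · intro h
    rw [← top_le_iff, ← bool_dm (E_bool T a)]
    exact sup_le_sup_left h _

theorem up {D : Set A} (hk : 0 < k) (hD : IsCDS T D) {x y : A} (hx : x ∈ D) (h : x ≤ y) :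
    y ∈ D := by
  refine hD.2 x hx y ?_
  rw [(rimp_eq_top_iff T x y).mpr ((E_le T hk x).trans h)]
  exact hD.1

theorem gen_cds (X : Set A) : IsCDS T (genCDS T X) :=
  ⟨fun _ hD => hD.1.1, fun x hx y h D hD => hD.1.2 x (hx D hD) y (h D hD)⟩

theorem subset_gen (X : Set A) : X ⊆ genCDS T X := fun _ hx _ hD => hD.2 hx

theorem part_i (hk : 0 < k) (a : A) : genCDS T {a} = {x : A | E T a ≤ x} := by
  apply Set.Subset.antisymm
  · apply Set.sInter_subset_of_mem
    refine ⟨⟨le_top, ?_⟩, ?_⟩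
    · intro x hx y hy
      have hx : E T a ≤ x := hx
      have hy : E T a ≤ rimp T x y := hy
      rw [rimp_eq] at hy
      have h1 := le_E T (E_le_t T hk a) (E_bool T a) hx
      have h2 := le_inf h1 hy
      rw [inf_sup_left, E_bool, bot_sup_eq] at h2
      exact h2.trans inf_le_right
    · rintro x rfl
      exact E_le T hk x
  · intro x hx
    refine (gen_cds T {a}).2 a (subset_gen T _ rfl) x ?_
    rw [(rimp_eq_top_iff T a x).mpr hx]
    exact (gen_cds T {a}).1

theorem part_ii (hk : 0 < k) (a : A) (H : Set A) :
    genCDS T (H ∪ {a}) = {x : A | rimp T a x ∈ genCDS T H} := by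
  have hG := gen_cds T H
  apply Set.Subset.antisymm
  · apply Set.sInter_subset_of_mem
    refine ⟨⟨?_, ?_⟩, ?_⟩
    · change rimp T a ⊤ ∈ genCDS T H
      rw [(rimp_eq_top_iff T a ⊤).mpr le_top]
      exact hG.1
    · intro x hx y hy
      change rimp T a y ∈ genCDS T H
      have hx : rimp T a x ∈ genCDS T H := hx
      have hy : rimp T a (rimp T x y) ∈ genCDS T H := hy
      refine hG.2 _ hx _ (up T hk hG hy ?_)
      rw [rimp_eq T (rimp T a x), rimp_eq T a, rimp_eq T a, rimp_eq T a, rimp_eq T x]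
      set e := E T a with he
      set f := E T (dm e ⊔ x) with hf
      have hw : f ⊓ e ≤ E T x := by
        apply le_E
        · rw [T.map_inf]
          exact inf_le_inf (E_le_t T hk _) (E_le_t T hk _)
        · exact bool_inf (E_bool T _) (E_bool T _)
        · have h1 : f ⊓ e ≤ e ⊓ (dm e ⊔ x) :=
            le_inf inf_le_right (inf_le_left.trans (E_le T hk _))
          rw [inf_sup_left, he, E_bool, bot_sup_eq] at h1
          exact h1.trans inf_le_right
      have hw2 := dm_anti hw
      rw [dm_inf] at hw2
      refine sup_le (le_sup_left.trans le_sup_right) (sup_le (hw2.trans ?_) ?_)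
      · exact sup_le_sup_left le_sup_left _
      · exact le_sup_right.trans le_sup_right
    · rintro x (hx | rfl)
      · refine up T hk hG (subset_gen T H hx) ?_
        rw [rimp_eq]; exact le_sup_right
      · change rimp T x x ∈ genCDS T H
        rw [(rimp_eq_top_iff T x x).mpr (E_le T hk x)]
        exact hG.1
  · intro x hx D hD
    exact hD.1.2 a (hD.2 (Or.inr rfl)) x
      (hx D ⟨hD.1, Set.subset_union_left.trans hD.2⟩)

end CkAux

theorem stmt10 {k : ℕ} (hk : 0 < k) (T : CkStr A k) (a : A) (H : Set A) :
    genCDS T {a} = {x : A | ((Finset.Icc 1 k).inf fun j => T.t^[j] (tri a)) ≤ x} ∧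
    genCDS T (H ∪ {a}) = {x : A | rimp T a x ∈ genCDS T H} ∧
    genCDS T {a} = {x : A | rimp T a x = ⊤} := by
  refine ⟨CkAux.part_i T hk a, CkAux.part_ii T hk a H, ?_⟩
  rw [CkAux.part_i T hk a]
  ext x
  exact (CkAux.rimp_eq_top_iff T a x).symm
end
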